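/- Every S-ring over the elementary abelian group E_9 of order 9 is Cayley isomorphic to one of the following: (1) Cyc(M, 𝔽_9), the S-ring over the additive group of the field 𝔽_9 of order 9 whose basic sets are the orbits of a nontrivial subgroup M of the multiplicative group 𝔽_9^× acting on 𝔽_9 by multiplication; (2) the tensor product of two S-rings over cyclic groups of order 3; (3) the wreath product of two S-rings over cyclic groups of order 3. -/

import Mathlib

open scoped Pointwise

/-- The element `\underline{X} = Σ_{x∈X} x` of the integral group ring `ℤG`. -/
noncomputable def grpSum {G : Type*} [Group G] [Fintype G] (X : Set G) :
    MonoidAlgebra ℤ G :=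
  ∑ x : G, X.indicator (fun g => MonoidAlgebra.single g (1 : ℤ)) x

/-- A Schur ring (S-ring) over a finite group `G`, described by its partition
into basic sets: (S1) `{1}` is a basic set, (S2) the class of basic sets is
closed under inverses, (S3) the ℤ-span of the sums `\underline{X}` is closed
under multiplication (i.e. is a subring of `ℤG`). -/
structure SchurRing (G : Type*) [Group G] [Fintype G] where
  basicSets : Set (Set G)
  nonempty_mem : ∀ X ∈ basicSets, X.Nonempty
  cover : ∀ g : G, ∃ X ∈ basicSets, g ∈ X
  disjoint' : ∀ X ∈ basicSets, ∀ Y ∈ basicSets, X ≠ Y → X ∩ Y = ∅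
  one_mem : {(1 : G)} ∈ basicSets
  inv_mem : ∀ X ∈ basicSets, X⁻¹ ∈ basicSets
  mul_mem : ∀ X ∈ basicSets, ∀ Y ∈ basicSets,
    grpSum X * grpSum Y ∈ Submodule.span ℤ (grpSum '' basicSets)

namespace SchurRing

variable {G : Type*} [Group G] [Fintype G]

/-- An `𝒜`-set: a union of basic sets. -/
def IsASet (A : SchurRing G) (S : Set G) : Prop :=
  ∃ T ⊆ A.basicSets, S = ⋃₀ T

/-- An `𝒜`-subgroup: a subgroup that is an `𝒜`-set. -/
def IsASubgroup (A : SchurRing G) (H : Subgroup G) : Prop :=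
  A.IsASet (H : Set G)

/-- `𝒜` is schurian: its basic sets are the orbits of the stabilizer of `1`
in some group `K` with `G_right ≤ K ≤ Sym(G)`. -/
def IsSchurian (A : SchurRing G) : Prop :=
  ∃ K : Subgroup (Equiv.Perm G), (∀ g : G, Equiv.mulRight g ∈ K) ∧
    A.basicSets = Set.range fun x : G =>
      MulAction.orbit (MulAction.stabilizer K (1 : G)) x

/-- `𝒜` is cyclotomic: its basic sets are the orbits of a subgroup of `Aut(G)`. -/
def IsCyclotomic (A : SchurRing G) : Prop :=
  ∃ M : Subgroup (MulAut G),
    A.basicSets = Set.range fun x : G => MulAction.orbit M x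

/-- `𝒜` is trivial: its basic sets are `{1}` and `G ∖ {1}`. -/
def IsTrivial (A : SchurRing G) : Prop :=
  A.basicSets ⊆ {{(1 : G)}, {(1 : G)}ᶜ}

/-- `𝒜 = 𝒜_H ⊗ 𝒜_K`: an internal tensor product decomposition of `𝒜`
with respect to the internal direct product `G = H × K`. -/
def IsTensorDecomp (A : SchurRing G) (H K : Subgroup G) : Prop :=
  A.IsASubgroup H ∧ A.IsASubgroup K ∧ H ⊓ K = ⊥ ∧ H ⊔ K = ⊤ ∧
  ∀ X ∈ A.basicSets, ∃ X₁ ∈ A.basicSets, ∃ X₂ ∈ A.basicSets,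
    X₁ ⊆ (H : Set G) ∧ X₂ ⊆ (K : Set G) ∧ X = X₁ * X₂

/-- `𝒜` is the `U/L`-wreath product: `U`, `L` are `𝒜`-subgroups, `L ⊴ G`,
`L ≤ U`, and `L ≤ rad(X)` for every basic set `X` outside `U`. -/
def IsWreathSection (A : SchurRing G) (U L : Subgroup G) : Prop :=
  A.IsASubgroup U ∧ A.IsASubgroup L ∧ L ≤ U ∧ L.Normal ∧
  ∀ X ∈ A.basicSets, ¬ X ⊆ (U : Set G) →
    ∀ g ∈ L, (g * ·) '' X = X ∧ (· * g) '' X = X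

end SchurRing

/-- A finite group is a Schur group if every S-ring over it is schurian. -/
def IsSchurGroup (G : Type*) [Group G] [Fintype G] : Prop :=
  ∀ A : SchurRing G, A.IsSchurian

/-- A Cayley isomorphism between S-rings: a group isomorphism mapping the
basic sets of `𝒜` onto the basic sets of `𝒜'`. -/
def IsCayleyIso {G G' : Type*} [Group G] [Fintype G] [Group G'] [Fintype G']
    (A : SchurRing G) (A' : SchurRing G') (f : G ≃* G') : Prop :=
  (fun X : Set G => ⇑f '' X) '' A.basicSets = A'.basicSets
namespace ElemAbelNine

/-- The elementary abelian group of order `9`, written additively. -/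
abbrev V := ZMod 3 × ZMod 3

/-- The determinant of the pair `(a, b)`; the pair is a basis iff it is nonzero. -/
abbrev det (a b : V) : ZMod 3 := a.1 * b.2 - a.2 * b.1

/-- Number of factorisations `z = u + v` with `u` in the class of `x` and `v` in the class of `y`. -/
abbrev factorCount (r : V → V → Bool) (x y z : V) : ℕ :=
  (Finset.univ.filter fun u : V => r x u = true ∧ r y (z - u) = true).card

/-- Equality of classes for the orbits of `±1`. -/
abbrev IsSignType (r : V → V → Bool) : Prop :=
  ∀ x y, r x y = true ↔ y = x ∨ y = -x

/-- Only two classes: zero, and all nonzero elements. -/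
abbrev IsTrivialType (r : V → V → Bool) : Prop :=
  ∀ x y, r x y = true ↔ (x = 0 ↔ y = 0)

/-- In the coordinates `(det v b, det a v)`, the classes are the orbits of the
quarter turn `(s, t) ↦ (-t, s)`. -/
abbrev IsQuarterTurnType (r : V → V → Bool) (a b : V) : Prop :=
  ∀ x y, r x y = true ↔
    (det y b = det x b ∧ det a y = det a x) ∨ (det y b = -det a x ∧ det a y = det x b) ∨
    (det y b = -det x b ∧ det a y = -det a x) ∨ (det y b = det a x ∧ det a y = -det x b)

/-- The classes are the products of classes along the basis `a, b`. -/
abbrev IsTensorType (r : V → V → Bool) (a b : V) : Prop :=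
  ∀ i j k l : ZMod 3, r (i • a + j • b) (k • a + l • b) = true ↔
    r (i • a) (k • a) = true ∧ r (j • b) (l • b) = true

/-- The line through `a` is a union of classes, and classes outside it are unions of cosets. -/
abbrev IsWreathType (r : V → V → Bool) (a : V) : Prop :=
  (∀ (i : ZMod 3) (y : V), r (i • a) y = true → ∃ k : ZMod 3, k • a = y) ∧
  ∀ y, (∃ k : ZMod 3, k • a = y) ∨ ∀ i : ZMod 3, r y (y + i • a) = true

/-- Representatives of the four lines. -/
def lineRep : Fin 4 → V := ![(0, 1), (1, 0), (1, 1), (1, 2)]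

abbrev IsClassified (r : V → V → Bool) : Prop :=
  IsSignType r ∨ IsTrivialType r ∨
  (∃ i, ∃ j > i, IsQuarterTurnType r (lineRep i) (lineRep j)) ∨
  (∃ i, ∃ j > i, IsTensorType r (lineRep i) (lineRep j)) ∨
  ∃ i, IsWreathType r (lineRep i)

/-- The index of the line through a nonzero element. -/
def lineIndex (x : V) : Fin 4 :=
  if x.1 = 0 then 0 else if x.2 = 0 then 1 else if x.1 = x.2 then 2 else 3

/-- Whether a nonzero element is the chosen representative of its line. -/
def isRep (x : V) : Bool := x.1 = 1 || (x.1 = 0 && x.2 = 1)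

/-- The inversion-invariant relation with prescribed values on line representatives:
`n i` relates the representative `e i` to `-e i`, while `p i j` and `q i j` relate `e i`
to `e j` and `-e j`. -/
def relOfBits (n : Fin 4 → Bool) (p q : Fin 4 → Fin 4 → Bool) (x y : V) : Bool :=
  if x = 0 ∨ y = 0 then x = y
  else if lineIndex x = lineIndex y then isRep x == isRep y || n (lineIndex x)
  else if isRep x == isRep y then p (lineIndex x) (lineIndex y)
  else q (lineIndex x) (lineIndex y)

theorem eq_relOfBits {r : V → V → Bool} (hrefl : ∀ x, r x x = true)
    (hsymm : ∀ x y, r x y = r y x) (hzero : ∀ x, r 0 x = true → x = 0)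
    (hneg : ∀ x y, r (-x) (-y) = r x y) {n : Fin 4 → Bool} {p q : Fin 4 → Fin 4 → Bool}
    (hn : ∀ i, n i = r (lineRep i) (-lineRep i))
    (hp : ∀ i j, i ≠ j → p i j = r (lineRep i) (lineRep j))
    (hq : ∀ i j, i ≠ j → q i j = r (lineRep i) (-lineRep j)) :
    r = relOfBits n p q := by
  have hx : ∀ x, x = 0 ∨ x = lineRep (lineIndex x) ∧ isRep x = true ∨
      x = -lineRep (lineIndex x) ∧ isRep x = false := by decide
  have h0 : ∀ x, r 0 x = decide (0 = x) := fun x => by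
    rw [Bool.eq_iff_iff, decide_eq_true_iff]
    exact ⟨fun h => (hzero x h).symm, fun h => h ▸ hrefl 0⟩
  funext x y
  rcases eq_or_ne x 0 with rfl | hx0
  · simp [relOfBits, h0]
  rcases eq_or_ne y 0 with rfl | hy0
  · simp [relOfBits, hsymm x, h0, eq_comm]
  have hq' : ∀ x y, r (-x) y = r x (-y) := fun x y => by rw [← hneg, neg_neg]
  have hx' := (hx x).resolve_left hx0
  have hy' := (hx y).resolve_left hy0
  simp only [relOfBits, hx0, hy0, or_self, if_false]
  generalize lineIndex x = i at *
  generalize lineIndex y = j at *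
  rcases eq_or_ne i j with rfl | hij
  · rcases hx' with ⟨rfl, h⟩ | ⟨rfl, h⟩ <;> rcases hy' with ⟨rfl, h'⟩ | ⟨rfl, h'⟩ <;>
      simp [h, h', hn, hrefl, hq']
  · rcases hx' with ⟨rfl, h⟩ | ⟨rfl, h⟩ <;> rcases hy' with ⟨rfl, h'⟩ | ⟨rfl, h'⟩ <;>
      simp [h, h', hp _ _ hij, hq _ _ hij, hij, hq']

/-- Symmetric matrix of bits with given strictly upper triangular entries. -/
def symmBits (b₀₁ b₀₂ b₀₃ b₁₂ b₁₃ b₂₃ : Bool) : Fin 4 → Fin 4 → Bool :=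
  ![![true, b₀₁, b₀₂, b₀₃], ![b₀₁, true, b₁₂, b₁₃], ![b₀₂, b₁₂, true, b₂₃], ![b₀₃, b₁₃, b₂₃, true]]

/-- Instances of transitivity on the pair of lines `i, j`. -/
abbrev PairTrans (nᵢ nⱼ p q : Bool) : Bool :=
  (!p || nᵢ == nⱼ) && (!q || nᵢ == nⱼ) && (!(p && q) || nᵢ) && (!(nᵢ && p) || q) && (!(nᵢ && q) || p)

/-- Instances of transitivity on a triple of lines. -/
abbrev TripleTrans (p q p' q' p'' q'' : Bool) : Bool :=
  (!(p && p') || p'') && (!(p && q') || q'') && (!(q && p') || q'') && (!(q && q') || p'') &&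
  (!(p && p'') || p') && (!(p && q'') || q') && (!(q && p'') || q') && (!(q && q'') || p') &&
  (!(p' && p'') || p) && (!(p' && q'') || q) && (!(q' && p'') || q) && (!(q' && q'') || p)

abbrev IsCoherent (r : V → V → Bool) : Prop :=
  ∀ i y j z, r (lineRep j) z = true →
    factorCount r (lineRep i) y (lineRep j) = factorCount r (lineRep i) y z

set_option synthInstance.maxHeartbeats 400000 in
set_option synthInstance.maxSize 2000 in
theorem isClassified_relOfBits :
    ∀ n₀ n₁ p₀₁ q₀₁, PairTrans n₀ n₁ p₀₁ q₀₁ = true →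
    ∀ n₂ p₀₂ q₀₂, PairTrans n₀ n₂ p₀₂ q₀₂ = true →
    ∀ p₁₂ q₁₂, PairTrans n₁ n₂ p₁₂ q₁₂ = true → TripleTrans p₀₁ q₀₁ p₁₂ q₁₂ p₀₂ q₀₂ = true →
    ∀ n₃ p₀₃ q₀₃, PairTrans n₀ n₃ p₀₃ q₀₃ = true →
    ∀ p₁₃ q₁₃, PairTrans n₁ n₃ p₁₃ q₁₃ = true → TripleTrans p₀₁ q₀₁ p₁₃ q₁₃ p₀₃ q₀₃ = true →
    ∀ p₂₃ q₂₃, PairTrans n₂ n₃ p₂₃ q₂₃ = true → TripleTrans p₀₂ q₀₂ p₂₃ q₂₃ p₀₃ q₀₃ = true →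
    TripleTrans p₁₂ q₁₂ p₂₃ q₂₃ p₁₃ q₁₃ = true →
    IsClassified (relOfBits ![n₀, n₁, n₂, n₃] (symmBits p₀₁ p₀₂ p₀₃ p₁₂ p₁₃ p₂₃)
      (symmBits q₀₁ q₀₂ q₀₃ q₁₂ q₁₃ q₂₃)) ∨
    ¬ IsCoherent (relOfBits ![n₀, n₁, n₂, n₃] (symmBits p₀₁ p₀₂ p₀₃ p₁₂ p₁₃ p₂₃)
      (symmBits q₀₁ q₀₂ q₀₃ q₁₂ q₁₃ q₂₃)) := by
  decide +kernel

theorem pairTrans {r : V → V → Bool} (hsymm : ∀ x y, r x y = r y x)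
    (htrans : ∀ x y z, r x y = true → r y z = true → r x z = true)
    (hneg : ∀ x y, r (-x) (-y) = r x y) (x y : V) :
    PairTrans (r x (-x)) (r y (-y)) (r x y) (r x (-y)) = true := by
  have h₁ := htrans y x (-y)
  have h₂ := htrans x y (-x)
  have h₃ := htrans x y (-y)
  have h₄ := htrans x (-y) y
  have h₅ := htrans (-x) x y
  have h₆ := htrans (-x) x (-y)
  have hq : ∀ x y, r (-x) y = r x (-y) := fun x y => by rw [← hneg, neg_neg]
  rw [hsymm y x] at h₁
  rw [← hq y x, hsymm _ x] at h₂
  rw [hsymm (-y)] at h₄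
  rw [hsymm (-x) x, hq] at h₅
  rw [hsymm (-x) x, hneg] at h₆
  clear htrans hneg hq hsymm
  generalize r x (-x) = a at *
  generalize r y (-y) = b at *
  generalize r x y = c at *
  generalize r x (-y) = d at *
  decide +revert

set_option synthInstance.maxSize 1000 in
theorem tripleTrans {r : V → V → Bool} (hsymm : ∀ x y, r x y = r y x)
    (htrans : ∀ x y z, r x y = true → r y z = true → r x z = true)
    (hneg : ∀ x y, r (-x) (-y) = r x y) (x y z : V) :
    TripleTrans (r x y) (r x (-y)) (r y z) (r y (-z)) (r x z) (r x (-z)) = true := by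
  have hq : ∀ x y, r (-x) y = r x (-y) := fun x y => by rw [← hneg, neg_neg]
  have hq' : ∀ x y, r x (-y) = r y (-x) := fun x y => by rw [hsymm, hq]
  have h : ∀ x y z, (r x y = true → r y z = true → r x z = true) ∧
      (r x y = true → r y (-z) = true → r x (-z) = true) ∧
      (r x (-y) = true → r y z = true → r x (-z) = true) ∧
      (r x (-y) = true → r y (-z) = true → r x z = true) := fun x y z =>
    ⟨htrans x y z, htrans x y (-z), hneg y z ▸ htrans x (-y) (-z), hq y z ▸ htrans x (-y) z⟩
  have h₁ := h x y z
  have h₂ := h y x z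
  have h₃ := h x z y
  rw [hsymm y x, hq' y x] at h₂
  rw [hsymm z y, hq' z y] at h₃
  clear htrans hneg hq hsymm hq' h
  generalize r x y = a at *
  generalize r x (-y) = b at *
  generalize r x z = c at *
  generalize r x (-z) = d at *
  generalize r y z = e at *
  generalize r y (-z) = f at *
  decide +revert

theorem isClassified_of_isCoherent {r : V → V → Bool} (hrefl : ∀ x, r x x = true)
    (hsymm : ∀ x y, r x y = r y x) (htrans : ∀ x y z, r x y = true → r y z = true → r x z = true)
    (hzero : ∀ x, r 0 x = true → x = 0) (hneg : ∀ x y, r (-x) (-y) = r x y)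
    (hr : IsCoherent r) : IsClassified r := by
  have hpair := pairTrans hsymm htrans hneg
  have htriple := tripleTrans hsymm htrans hneg
  have hswap : ∀ x y, r x (-y) = r y (-x) := fun x y => by rw [hsymm, ← hneg, neg_neg]
  let e := lineRep
  have hbits : r = relOfBits ![r (e 0) (-e 0), r (e 1) (-e 1), r (e 2) (-e 2), r (e 3) (-e 3)]
      (symmBits (r (e 0) (e 1)) (r (e 0) (e 2)) (r (e 0) (e 3))
        (r (e 1) (e 2)) (r (e 1) (e 3)) (r (e 2) (e 3)))
      (symmBits (r (e 0) (-e 1)) (r (e 0) (-e 2)) (r (e 0) (-e 3))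
        (r (e 1) (-e 2)) (r (e 1) (-e 3)) (r (e 2) (-e 3))) :=
    eq_relOfBits hrefl hsymm hzero hneg (by intro i; fin_cases i <;> rfl)
      (by intro i j _; fin_cases i <;> fin_cases j <;> first | contradiction | rfl | exact hsymm _ _)
      (by intro i j _; fin_cases i <;> fin_cases j <;>
            first | contradiction | rfl | exact hswap _ _)
  have key := isClassified_relOfBits _ _ _ _ (hpair (e 0) (e 1))
    _ _ _ (hpair (e 0) (e 2)) _ _ (hpair (e 1) (e 2)) (htriple (e 0) (e 1) (e 2))
    _ _ _ (hpair (e 0) (e 3)) _ _ (hpair (e 1) (e 3)) (htriple (e 0) (e 1) (e 3))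
    _ _ (hpair (e 2) (e 3)) (htriple (e 0) (e 2) (e 3)) (htriple (e 1) (e 2) (e 3))
  rw [← hbits] at key
  exact key.resolve_right (not_not_intro hr)

end ElemAbelNine

namespace SchurRing

variable {G : Type*} [Group G] [Fintype G]

/-- Two elements lie in the same basic set. -/
def SameClass (A : SchurRing G) (x y : G) : Prop := ∃ X ∈ A.basicSets, x ∈ X ∧ y ∈ X

variable {A : SchurRing G}

theorem eq_of_mem_of_mem {X Y : Set G} (hX : X ∈ A.basicSets) (hY : Y ∈ A.basicSets) {x : G}
    (hx : x ∈ X) (hy : x ∈ Y) : X = Y := by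
  by_contra h
  have : x ∈ X ∩ Y := ⟨hx, hy⟩
  simp [A.disjoint' X hX Y hY h] at this

theorem SameClass.refl (x : G) : A.SameClass x x :=
  let ⟨X, hX, hx⟩ := A.cover x
  ⟨X, hX, hx, hx⟩

theorem SameClass.symm {x y : G} : A.SameClass x y → A.SameClass y x :=
  fun ⟨X, hX, hx, hy⟩ => ⟨X, hX, hy, hx⟩

theorem sameClass_iff_mem {X : Set G} (hX : X ∈ A.basicSets) {x : G} (hx : x ∈ X) {y : G} :
    A.SameClass x y ↔ y ∈ X := by
  refine ⟨fun ⟨Y, hY, hxY, hyY⟩ => ?_, fun hy => ⟨X, hX, hx, hy⟩⟩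
  rwa [eq_of_mem_of_mem hX hY hx hxY]

theorem SameClass.trans {x y z : G} (h : A.SameClass x y) (h' : A.SameClass y z) :
    A.SameClass x z := by
  obtain ⟨X, hX, hx, hy⟩ := h
  exact ⟨X, hX, hx, (sameClass_iff_mem hX hy).1 h'⟩

theorem SameClass.inv {x y : G} : A.SameClass x y → A.SameClass x⁻¹ y⁻¹ :=
  fun ⟨X, hX, hx, hy⟩ => ⟨X⁻¹, A.inv_mem X hX, by simpa, by simpa⟩

theorem sameClass_one {x : G} : A.SameClass 1 x ↔ x = 1 :=
  sameClass_iff_mem A.one_mem rfl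

theorem mem_basicSets_iff {X : Set G} :
    X ∈ A.basicSets ↔ ∃ x, X = {y | A.SameClass x y} := by
  constructor
  · intro hX
    obtain ⟨x, hx⟩ := A.nonempty_mem X hX
    exact ⟨x, Set.ext fun y => (sameClass_iff_mem hX hx).symm⟩
  · rintro ⟨x, rfl⟩
    obtain ⟨X, hX, hx⟩ := A.cover x
    convert hX using 1
    exact Set.ext fun y => sameClass_iff_mem hX hx

theorem isASet_of_sameClass {S : Set G} (h : ∀ x y, A.SameClass x y → x ∈ S → y ∈ S) :
    A.IsASet S := by
  refine ⟨{X | X ∈ A.basicSets ∧ X ⊆ S}, fun X hX => hX.1, Set.ext fun x => ⟨fun hx => ?_, ?_⟩⟩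
  · obtain ⟨X, hX, hxX⟩ := A.cover x
    exact ⟨X, ⟨hX, fun y hy => h x y ⟨X, hX, hxX, hy⟩ hx⟩, hxX⟩
  · rintro ⟨X, ⟨-, hXS⟩, hx⟩
    exact hXS hx

open Classical in
theorem coeff_grpSum (X : Set G) (g : G) : (grpSum X).coeff g = if g ∈ X then 1 else 0 := by
  simp only [grpSum, Set.indicator_apply, MonoidAlgebra.coeff_sum, Finsupp.finsetSum_apply,
    apply_ite (fun f : MonoidAlgebra ℤ G => f.coeff g), MonoidAlgebra.coeff_single,
    MonoidAlgebra.coeff_zero, Finsupp.single_apply, Finsupp.zero_apply]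
  rw [Finset.sum_eq_single g] <;> simp +contextual

theorem coeff_eq_of_mem_span {f : MonoidAlgebra ℤ G}
    (hf : f ∈ Submodule.span ℤ (grpSum '' A.basicSets)) {z w : G} (h : A.SameClass z w) :
    f.coeff z = f.coeff w := by
  classical
  induction hf using Submodule.span_induction with
  | mem f hf =>
    obtain ⟨X, hX, rfl⟩ := hf
    obtain ⟨Z, hZ, hz, hw⟩ := h
    have : z ∈ X ↔ w ∈ X :=
      ⟨fun hzX => eq_of_mem_of_mem hX hZ hzX hz ▸ hw, fun hwX => eq_of_mem_of_mem hX hZ hwX hw ▸ hz⟩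
    simp [coeff_grpSum, this]
  | zero => rfl
  | add f g _ _ hf hg => simp [hf, hg]
  | smul n f _ hf => simp only [MonoidAlgebra.coeff_smul_apply, hf]

open Classical in
theorem coeff_grpSum_mul_grpSum (X Y : Set G) (z : G) :
    (grpSum X * grpSum Y).coeff z =
      ((Finset.univ.filter fun u : G => u ∈ X ∧ u⁻¹ * z ∈ Y).card : ℤ) := by
  rw [MonoidAlgebra.coeff_mul_antidiag _ _ z (Finset.univ.image fun u : G => (u, u⁻¹ * z)),
    Finset.sum_image fun u _ v _ h => congr_arg Prod.fst h]
  · simp [coeff_grpSum, ← ite_and, and_comm]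
  · rintro ⟨u, v⟩
    simp [eq_inv_mul_iff_mul_eq, eq_comm]

open Classical in
theorem card_factorisations_eq (A : SchurRing G) (x y : G) {z w : G} (h : A.SameClass z w) :
    (Finset.univ.filter fun u : G => A.SameClass x u ∧ A.SameClass y (u⁻¹ * z)).card =
      (Finset.univ.filter fun u : G => A.SameClass x u ∧ A.SameClass y (u⁻¹ * w)).card := by
  have := coeff_eq_of_mem_span (A.mul_mem _ (mem_basicSets_iff.2 ⟨x, rfl⟩) _
    (mem_basicSets_iff.2 ⟨y, rfl⟩)) h
  rw [coeff_grpSum_mul_grpSum, coeff_grpSum_mul_grpSum] at this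
  exact_mod_cast this

end SchurRing

namespace ElemAbelNine

variable (A : SchurRing (Multiplicative V))

open Multiplicative

open Classical in
/-- The relation of lying in the same basic set, in additive notation. -/
noncomputable def classRel (x y : V) : Bool := decide (A.SameClass (ofAdd x) (ofAdd y))

variable {A}

theorem classRel_iff {x y : V} : classRel A x y = true ↔ A.SameClass (ofAdd x) (ofAdd y) := by
  simp [classRel]

theorem classRel_symm (x y : V) : classRel A x y = classRel A y x := by
  rw [Bool.eq_iff_iff, classRel_iff, classRel_iff]
  exact ⟨.symm, .symm⟩

theorem isCoherent_classRel : IsCoherent (classRel A) := by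
  classical
  have key : ∀ x y z, factorCount (classRel A) x y z = (Finset.univ.filter fun u =>
      A.SameClass (ofAdd x) u ∧ A.SameClass (ofAdd y) (u⁻¹ * ofAdd z)).card := fun x y z => by
    refine Finset.card_bij (fun u _ => ofAdd u) (fun u hu => ?_) (fun u _ v _ h => h)
      fun u hu => ⟨toAdd u, ?_, rfl⟩ <;>
    simpa [classRel_iff, sub_eq_neg_add] using hu
  intro i y j z h
  rw [key, key]
  exact A.card_factorisations_eq _ _ (classRel_iff.1 h)

variable (A) in
theorem isClassified_classRel : IsClassified (classRel A) := by
  refine isClassified_of_isCoherent (fun x => ?_) classRel_symm (fun x y z => ?_) (fun x => ?_)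
    (fun x y => ?_) isCoherent_classRel
  · exact classRel_iff.2 (.refl _)
  · simpa only [classRel_iff] using .trans
  · exact fun h => SchurRing.sameClass_one.1 (classRel_iff.1 h)
  · rw [Bool.eq_iff_iff, classRel_iff, classRel_iff]
    exact ⟨fun h => by simpa using h.inv, fun h => h.inv⟩

/-- The subgroup spanned by `a`. -/
def line (a : V) : Subgroup (Multiplicative V) :=
  (ZMod 3 ∙ a).toAddSubgroup.toSubgroup

theorem mem_line {a : V} {x : Multiplicative V} : x ∈ line a ↔ ∃ k : ZMod 3, k • a = toAdd x :=
  Submodule.mem_span_singleton (y := a) (x := toAdd x)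

theorem card_line {a : V} (ha : a ≠ 0) : Nat.card (line a) = 3 := by
  have h : Nat.card (ZMod 3 ∙ a) = 3 := by
    rw [Module.natCard_eq_pow_finrank (K := ZMod 3), finrank_span_singleton ha, Nat.card_zmod, pow_one]
  exact h

theorem lineRep_ne_zero : ∀ i, lineRep i ≠ 0 := by decide

theorem det_lineRep_ne_zero : ∀ {i j}, j > i → det (lineRep i) (lineRep j) ≠ 0 := by decide

theorem exists_smul_add_smul : ∀ {a b : V}, det a b ≠ 0 → ∀ v, ∃ i j : ZMod 3, i • a + j • b = v := by
  decide

theorem smul_add_smul_eq_zero :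
    ∀ {a b : V}, det a b ≠ 0 → ∀ i j : ZMod 3, i • a + j • b = 0 → i = 0 ∧ j = 0 := by
  decide

theorem isASubgroup_line {a : V}
    (h : ∀ (i : ZMod 3) y, classRel A (i • a) y = true → ∃ k : ZMod 3, k • a = y) :
    A.IsASubgroup (line a) := by
  refine SchurRing.isASet_of_sameClass fun x y hxy hx => ?_
  obtain ⟨i, hi⟩ := mem_line.1 hx
  refine mem_line.2 (h i _ (classRel_iff.2 ?_))
  rw [hi]
  exact hxy

theorem isTensorDecomp_of_isTensorType {a b : V} (hab : det a b ≠ 0)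
    (h : IsTensorType (classRel A) a b) : A.IsTensorDecomp (line a) (line b) := by
  have hzero : ∀ x : V, classRel A 0 x = true → x = 0 := fun x hx =>
    SchurRing.sameClass_one.1 (classRel_iff.1 hx)
  have ha : ∀ (i : ZMod 3) y, classRel A (i • a) y = true → ∃ k : ZMod 3, k • a = y := by
    intro i y hy
    obtain ⟨k, l, rfl⟩ := exists_smul_add_smul hab y
    have := hzero _ (by simpa using ((h i 0 k l).1 (by simpa using hy)).2)
    exact ⟨k, by simp [this]⟩
  have hb : ∀ (j : ZMod 3) y, classRel A (j • b) y = true → ∃ k : ZMod 3, k • b = y := by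
    intro j y hy
    obtain ⟨k, l, rfl⟩ := exists_smul_add_smul hab y
    have := hzero _ (by simpa using ((h 0 j k l).1 (by simpa using hy)).1)
    exact ⟨l, by simp [this]⟩
  refine ⟨isASubgroup_line ha, isASubgroup_line hb, ?_, ?_, ?_⟩
  · rw [eq_bot_iff]
    intro x hx
    obtain ⟨i, hi⟩ := mem_line.1 hx.1
    obtain ⟨j, hj⟩ := mem_line.1 hx.2
    have := smul_add_smul_eq_zero hab i (-j) (by rw [hi, neg_smul, hj, add_neg_cancel])
    rw [this.1, zero_smul] at hi
    exact hi.symm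
  · rw [eq_top_iff]
    intro x _
    obtain ⟨i, j, hx⟩ := exists_smul_add_smul hab (toAdd x)
    exact Subgroup.mem_sup.2 ⟨ofAdd (i • a), mem_line.2 ⟨i, rfl⟩, ofAdd (j • b),
      mem_line.2 ⟨j, rfl⟩, hx⟩
  · intro X hX
    obtain ⟨x, rfl⟩ := SchurRing.mem_basicSets_iff.1 hX
    obtain ⟨i, j, hx⟩ := exists_smul_add_smul hab (toAdd x)
    obtain rfl : ofAdd (i • a + j • b) = x := hx
    refine ⟨_, SchurRing.mem_basicSets_iff.2 ⟨ofAdd (i • a), rfl⟩,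
      _, SchurRing.mem_basicSets_iff.2 ⟨ofAdd (j • b), rfl⟩,
      fun y hy => mem_line.2 (ha i _ (classRel_iff.2 hy)),
      fun y hy => mem_line.2 (hb j _ (classRel_iff.2 hy)), Set.ext fun y => ?_⟩
    rw [Set.mem_mul]
    constructor
    · intro hy
      obtain ⟨k, l, hkl⟩ := exists_smul_add_smul hab (toAdd y)
      obtain rfl : ofAdd (k • a + l • b) = y := hkl
      have := (h i j k l).1 (classRel_iff.2 hy)
      exact ⟨_, classRel_iff.1 this.1, _, classRel_iff.1 this.2, rfl⟩
    · rintro ⟨u, hu, v, hv, rfl⟩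
      obtain ⟨k, hk⟩ := ha i (toAdd u) (classRel_iff.2 hu)
      obtain ⟨l, hl⟩ := hb j (toAdd v) (classRel_iff.2 hv)
      obtain rfl : ofAdd (k • a) = u := hk
      obtain rfl : ofAdd (l • b) = v := hl
      exact classRel_iff.1 ((h i j k l).2 ⟨classRel_iff.2 hu, classRel_iff.2 hv⟩)

theorem isWreathSection_of_isWreathType {a : V} (h : IsWreathType (classRel A) a) :
    A.IsWreathSection (line a) (line a) := by
  have hL := isASubgroup_line h.1
  refine ⟨hL, hL, le_rfl, inferInstance, fun X hX hXL => ?_⟩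
  have hsub : ∀ g ∈ line a, ∀ x ∈ X, g * x ∈ X := by
    intro g hg x hx
    obtain ⟨k, hk⟩ := mem_line.1 hg
    have hx' : x ∉ line a := fun hxL => hXL fun y hy => by
      obtain ⟨i, hi⟩ := mem_line.1 hxL
      refine mem_line.2 (h.1 i _ (classRel_iff.2 ?_))
      rw [hi]
      exact (SchurRing.sameClass_iff_mem hX hx).2 hy
    have := (h.2 (toAdd x)).resolve_left (fun H => hx' (mem_line.2 H)) k
    rw [hk, classRel_iff, ← toAdd_mul, mul_comm] at this
    exact (SchurRing.sameClass_iff_mem hX hx).1 this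
  have himage : ∀ g ∈ line a, (g * ·) '' X = X := fun g hg => by
    refine Set.Subset.antisymm (Set.image_subset_iff.2 (hsub g hg)) fun x hx => ?_
    exact ⟨g⁻¹ * x, hsub _ (inv_mem hg) x hx, mul_inv_cancel_left g x⟩
  exact fun g hg => ⟨himage g hg, by simpa only [mul_comm] using himage g hg⟩

section Field

variable {F : Type*} [Field F]

theorem exists_orbit_partition (M : Subgroup Fˣ) (f : V ≃+ F)
    (h : ∀ x y, classRel A x y = true ↔ ∃ u ∈ M, (u : F) * f x = f y) :
    ∃ f : Multiplicative V ≃* Multiplicative F,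
      (fun X : Set (Multiplicative V) => ⇑f '' X) '' A.basicSets =
        Set.range fun x : F => ⇑Multiplicative.ofAdd '' MulAction.orbit M x := by
  have key : ∀ x, AddEquiv.toMultiplicative f '' {y | A.SameClass (ofAdd x) y} =
      ⇑Multiplicative.ofAdd '' MulAction.orbit M (f x) := fun x => by
    ext y
    constructor
    · rintro ⟨z, hz, rfl⟩
      obtain ⟨u, hu, huz⟩ := (h x (toAdd z)).1 (classRel_iff.2 hz)
      exact ⟨_, ⟨⟨u, hu⟩, huz⟩, rfl⟩
    · rintro ⟨_, ⟨⟨u, hu⟩, rfl⟩, rfl⟩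
      refine ⟨ofAdd (f.symm (u * f x)), classRel_iff.1 ((h x _).2 ⟨u, hu, ?_⟩), ?_⟩
      · rw [f.apply_symm_apply]
      · exact congr_arg ofAdd (f.apply_symm_apply _)
  refine ⟨AddEquiv.toMultiplicative f, Set.ext fun X => ⟨?_, ?_⟩⟩
  · rintro ⟨Y, hY, rfl⟩
    obtain ⟨x, rfl⟩ := SchurRing.mem_basicSets_iff.1 hY
    exact ⟨f (toAdd x), (key (toAdd x)).symm⟩
  · rintro ⟨x, rfl⟩
    refine ⟨_, SchurRing.mem_basicSets_iff.2 ⟨ofAdd (f.symm x), rfl⟩, ?_⟩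
    simpa only [f.apply_symm_apply] using key (f.symm x)

theorem mem_zpowers_neg_one {u : Fˣ} : u ∈ Subgroup.zpowers (-1) ↔ u = 1 ∨ u = -1 := by
  constructor
  · rintro ⟨k, rfl⟩
    obtain ⟨c, rfl | rfl⟩ := k.even_or_odd'
    · exact .inl (by simp [zpow_mul])
    · exact .inr (by simp [zpow_mul, zpow_add])
  · rintro (rfl | rfl)
    · exact one_mem _
    · exact Subgroup.mem_zpowers _

theorem mem_zpowers_of_sq_eq_neg_one {ω : Fˣ} (hω : ω ^ 2 = -1) {u : Fˣ} :
    u ∈ Subgroup.zpowers ω ↔ u = 1 ∨ u = ω ∨ u = -1 ∨ u = -ω := by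
  have hmem := Subgroup.mem_zpowers ω
  have hneg : -1 ∈ Subgroup.zpowers ω := hω ▸ pow_mem hmem 2
  constructor
  · rintro ⟨k, rfl⟩
    obtain ⟨c, hk⟩ := k.even_or_odd'
    have hc : ω ^ (2 * c) = 1 ∨ ω ^ (2 * c) = -1 := by
      rw [zpow_mul]
      refine mem_zpowers_neg_one.1 ⟨c, ?_⟩
      simp only
      rw [← hω, zpow_ofNat]
    rcases hk with rfl | rfl <;> rcases hc with hc | hc <;> simp [zpow_add, hc]
  · rintro (rfl | rfl | rfl | rfl)
    · exact one_mem _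
    · exact hmem
    · exact hneg
    · simpa using mul_mem hneg hmem

variable [Algebra (ZMod 3) F] {ω : F}

theorem algebraMap_add_mul_inj (hω : ω ^ 2 = -1) {s t s' t' : ZMod 3} :
    algebraMap _ F s + algebraMap _ F t * ω = algebraMap _ F s' + algebraMap _ F t' * ω ↔
      s = s' ∧ t = t' := by
  refine ⟨fun h => ?_, fun h => by rw [h.1, h.2]⟩
  have hsq : algebraMap (ZMod 3) F ((s - s') ^ 2 + (t - t') ^ 2) = 0 := by
    simp only [map_add, map_pow, map_sub]
    linear_combination (algebraMap _ F s - algebraMap _ F s' -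
      (algebraMap _ F t - algebraMap _ F t') * ω) * h +
      (algebraMap _ F t - algebraMap _ F t') ^ 2 * hω
  rw [map_eq_zero] at hsq
  clear h
  revert s s' t t'
  decide

/-- The additive isomorphism `v ↦ det v b + (det a v) ω` attached to a basis `a, b` and a
square root `ω` of `-1`. -/
theorem exists_addEquiv (hF : Nat.card F = 9) (hω : ω ^ 2 = -1) {a b : V} (hab : det a b ≠ 0) :
    ∃ f : V ≃+ F, ∀ v, f v = algebraMap _ F (det v b) + algebraMap _ F (det a v) * ω := by
  let f : V →+ F := AddMonoidHom.mk'
    (fun v => algebraMap _ F (det v b) + algebraMap _ F (det a v) * ω) fun v w => by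
      simp only [Prod.fst_add, Prod.snd_add, map_sub, map_add, map_mul]
      ring
  have hdet : ∀ {a b : V}, det a b ≠ 0 → ∀ v, det v b = 0 → det a v = 0 → v = 0 := by decide
  have hinj : Function.Injective f := (injective_iff_map_eq_zero f).2 fun v hv => by
    have h : algebraMap _ F (det v b) + algebraMap _ F (det a v) * ω =
      algebraMap (ZMod 3) F 0 + algebraMap (ZMod 3) F 0 * ω := by
        rw [map_zero, zero_mul, add_zero]
        exact hv
    obtain ⟨h₁, h₂⟩ := (algebraMap_add_mul_inj hω).1 h
    exact hdet hab v h₁ h₂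
  have : Finite F := Nat.finite_of_card_ne_zero (by simp [hF])
  have hbij := hinj.bijective_of_nat_card_le (by simp [hF])
  exact ⟨AddEquiv.ofBijective f hbij, fun v => rfl⟩

end Field

/-- The conclusion that the basic sets are the orbits of a nontrivial multiplicative group of
a field of order `9`. -/
theorem exists_cyclotomic_of_types {F : Type*} [Field F] [Algebra (ZMod 3) F]
    (hF : Nat.card F = 9)
    (h : IsSignType (classRel A) ∨ IsTrivialType (classRel A) ∨
      ∃ a b, det a b ≠ 0 ∧ IsQuarterTurnType (classRel A) a b) :
    ∃ M : Subgroup Fˣ, ⊥ < M ∧ ∃ f : Multiplicative V ≃* Multiplicative F,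
      (fun X : Set (Multiplicative V) => ⇑f '' X) '' A.basicSets =
        Set.range fun x : F => ⇑Multiplicative.ofAdd '' MulAction.orbit M x := by
  have : Finite F := Nat.finite_of_card_ne_zero (by simp [hF])
  have : Fintype F := Fintype.ofFinite F
  obtain ⟨ω, hω⟩ : IsSquare (-1 : F) := by
    rw [FiniteField.isSquare_neg_one_iff, ← Nat.card_eq_fintype_card, hF]
    decide
  rw [← sq] at hω
  have hne : (-1 : Fˣ) ≠ 1 := fun h => by
    have h₁ : (-1 : F) = 1 := by simpa using congr_arg Units.val h
    have h₂ : algebraMap (ZMod 3) F (-1) = algebraMap (ZMod 3) F 1 := by simpa using h₁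
    exact absurd ((algebraMap (ZMod 3) F).injective h₂) (by decide)
  have hbot : ∀ M : Subgroup Fˣ, -1 ∈ M → ⊥ < M := fun M hM =>
    bot_lt_iff_ne_bot.2 fun h => hne (Subgroup.mem_bot.1 (h ▸ hM))
  obtain ⟨f, -⟩ := exists_addEquiv hF hω.symm (a := (1, 0)) (b := (0, 1)) (by decide)
  rcases h with h | h | ⟨a, b, hab, h⟩
  · refine ⟨_, hbot _ (Subgroup.mem_zpowers _), exists_orbit_partition _ f fun x y => ?_⟩
    rw [h]
    simp only [mem_zpowers_neg_one, or_and_right, exists_or, exists_eq_left, Units.val_one,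
      Units.val_neg, one_mul, neg_one_mul, ← map_neg f, f.injective.eq_iff]
    simp only [eq_comm]
  · refine ⟨⊤, hbot _ (Subgroup.mem_top _), exists_orbit_partition _ f fun x y => ?_⟩
    rw [h]
    constructor
    · intro hxy
      by_cases hx : x = 0
      · exact ⟨1, trivial, by simp [hx, hxy.1 hx]⟩
      · have hx' : f x ≠ 0 := by simpa using hx
        have hy' : f y ≠ 0 := by simpa using mt hxy.2 hx
        exact ⟨Units.mk0 _ hy' * (Units.mk0 _ hx')⁻¹, trivial, by simp [hx']⟩
    · rintro ⟨u, -, hu⟩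
      rw [← f.map_eq_zero_iff, ← f.map_eq_zero_iff (x := y), ← hu]
      simp
  · obtain ⟨f, hf⟩ := exists_addEquiv hF hω.symm hab
    have hω0 : ω ≠ 0 := by
      rintro rfl
      simp at hω
    have hω' : Units.mk0 ω hω0 ^ 2 = -1 := Units.ext (by simpa using hω.symm)
    refine ⟨Subgroup.zpowers (Units.mk0 ω hω0), hbot _ ⟨2, by simpa using hω'⟩,
      exists_orbit_partition _ f fun x y => ?_⟩
    rw [h]
    simp only [mem_zpowers_of_sq_eq_neg_one hω', or_and_right, exists_or, exists_eq_left,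
      ← algebraMap_add_mul_inj (F := F) hω.symm, hf, Units.val_mk0, Units.val_one, Units.val_neg,
      map_neg]
    generalize algebraMap _ F (det x b) = s
    generalize algebraMap _ F (det a x) = t
    have e₁ : ω * (s + t * ω) = -t + s * ω := by linear_combination -t * hω
    have e₂ : -ω * (s + t * ω) = t + -s * ω := by linear_combination t * hω
    rw [e₁, e₂, one_mul, neg_one_mul, neg_add, neg_mul]
    simp only [neg_mul, eq_comm]

end ElemAbelNine

open ElemAbelNine in
theorem srings_over_E9_classification
    (A : SchurRing (Multiplicative (ZMod 3 × ZMod 3))) :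
    -- (1) cyclotomic S-ring over the field 𝔽₉
    (∃ M : Subgroup (GaloisField 3 2)ˣ, ⊥ < M ∧
      ∃ f : Multiplicative (ZMod 3 × ZMod 3) ≃* Multiplicative (GaloisField 3 2),
        (fun X : Set (Multiplicative (ZMod 3 × ZMod 3)) => ⇑f '' X) '' A.basicSets =
          Set.range fun x : GaloisField 3 2 =>
            ⇑Multiplicative.ofAdd '' MulAction.orbit M x) ∨
    -- (2) tensor product of two S-rings over C₃
    (∃ C D : Subgroup (Multiplicative (ZMod 3 × ZMod 3)),
      Nat.card C = 3 ∧ Nat.card D = 3 ∧ A.IsTensorDecomp C D) ∨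
    -- (3) wreath product of two S-rings over C₃
    (∃ L : Subgroup (Multiplicative (ZMod 3 × ZMod 3)),
      Nat.card L = 3 ∧ A.IsWreathSection L L) := by
  have hF : Nat.card (GaloisField 3 2) = 9 := GaloisField.card 3 2 two_ne_zero
  rcases isClassified_classRel A with h | h | ⟨i, j, hij, h⟩ | ⟨i, j, hij, h⟩ | ⟨i, h⟩
  · exact .inl (exists_cyclotomic_of_types hF (.inl h))
  · exact .inl (exists_cyclotomic_of_types hF (.inr (.inl h)))
  · exact .inl (exists_cyclotomic_of_types hF (.inr (.inr ⟨_, _, det_lineRep_ne_zero hij, h⟩)))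
  · exact .inr (.inl ⟨_, _, card_line (lineRep_ne_zero i), card_line (lineRep_ne_zero j),
      isTensorDecomp_of_isTensorType (det_lineRep_ne_zero hij) h⟩)
  · exact .inr (.inr ⟨_, card_line (lineRep_ne_zero i), isWreathSection_of_isWreathType h⟩)
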